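/- Let (V, w, d) be a finite weighted metric space, X ⊆ V a nonempty subset with |X| = m, and k, k' integers with 1 ≤ k ≤ k' ≤ m. For nonempty S ⊆ V let cost(S) = ∑_{x∈V} w(x)·min_{y∈S} d(x,y) and OPT_k(V) = min over S* ⊆ V with |S*| = k of cost(S*). Let X = S_m ⊇ S_{m−1} ⊇ ⋯ ⊇ S_{k'} be any chain of subsets such that for each i ∈ [k'+1, m], S_{i−1} = S_i − y_i for some y_i ∈ S_i achieving cost(S_i − y_i) = min_{z∈S_i} cost(S_i − z). Then cost(S_{k'}) ≤ cost(X) + ( ∑_{i=k'+1}^{m} 2/(i − k) ) · OPT_k(V). -/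

import Mathlib

/-!
Let `T` be an optimal set of `k` centers. If `S` is the current set, with `S.card = i > k`, let
`Q ⊆ S` collect, for every `t ∈ T`, a point of `S` nearest to `t`; then `Q` has at most `k` points.
Removing a point `z ∈ S \ Q` only affects the points `x` whose nearest center in `S` is `z`. Such an
`x` can be rerouted to the point of `Q` nearest to its center `t ∈ T`, at distance at most
`2 d(x, t) + d(x, S)` by the triangle inequality (`distToSet_erase_le`). Each `x` is affected by at
most one `z`, so the increases over all `z ∈ S \ Q` add up to at most `2 cost(T)`, and since
`|S \ Q| ≥ i - k`, the cheapest removal costs at most `2 / (i - k) * cost(T)`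
(`kCost_erase_le`). Summing over the steps of the chain gives the theorem.
-/

open Finset

/-- Distance from a point to a (nonempty) finite set: `min_{y ∈ S} d(x,y)`. -/
noncomputable def distToSet {V : Type*} [MetricSpace V] (x : V) (S : Finset V) : ℝ :=
  sInf ((fun y => dist x y) '' ↑S)

/-- `k`-median cost of a center set `S` with respect to the point set `U`:
`∑_{x ∈ U} w(x) · d(x, S)`. -/
noncomputable def kCost {V : Type*} [MetricSpace V] (w : V → NNReal) (S U : Finset V) : ℝ :=
  ∑ x ∈ U, (w x : ℝ) * distToSet x S

/-- `OPT_k(U, X)`: minimum over `S ⊆ X` with `|S| = k` of `kCost w S U`. -/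
noncomputable def kOPT {V : Type*} [MetricSpace V] (w : V → NNReal) (k : ℕ) (U X : Finset V) : ℝ :=
  sInf {c : ℝ | ∃ S : Finset V, S ⊆ X ∧ S.card = k ∧ c = kCost w S U}

theorem distToSet_le {V : Type*} [MetricSpace V] (x : V) {S : Finset V} {y : V} (hy : y ∈ S) :
    distToSet x S ≤ dist x y :=
  csInf_le ⟨0, by rintro _ ⟨z, -, rfl⟩; exact dist_nonneg⟩ ⟨y, hy, rfl⟩

theorem exists_distToSet_eq {V : Type*} [MetricSpace V] (x : V) {S : Finset V}
    (hS : S.Nonempty) : ∃ y ∈ S, distToSet x S = dist x y := by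
  have h : distToSet x S ∈ (fun y => dist x y) '' (S : Set V) :=
    Set.Nonempty.csInf_mem (Set.Nonempty.image _ (Finset.coe_nonempty.mpr hS))
      (S.finite_toSet.image _)
  obtain ⟨y, hy, h⟩ := h
  exact ⟨y, hy, h.symm⟩

theorem distToSet_nonneg {V : Type*} [MetricSpace V] (x : V) (S : Finset V) :
    0 ≤ distToSet x S :=
  Real.sInf_nonneg (by rintro _ ⟨z, -, rfl⟩; exact dist_nonneg)

/-- Effect on a single point `x` of removing a center `z` that is not selected by the nearest-point
map `p`: nothing changes unless `z` is the center `c` serving `x`, and then `x` is rerouted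
through its nearest point of `T`. -/
theorem distToSet_erase_le {V : Type*} [MetricSpace V] [DecidableEq V] {S T : Finset V}
    (hT : T.Nonempty) {p : V → V} (hpS : ∀ t, p t ∈ S)
    (hp : ∀ t, distToSet t S = dist t (p t)) {x c z : V} (hc : c ∈ S)
    (hxc : distToSet x S = dist x c) (hz : z ∉ T.image p) :
    distToSet x (S.erase z) ≤ distToSet x S + if c = z then 2 * distToSet x T else 0 := by
  split_ifs with h
  · obtain ⟨t, ht, hxt⟩ := exists_distToSet_eq x hT
    have hne : p t ≠ z := fun e => hz (e ▸ Finset.mem_image_of_mem p ht)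
    have h1 := distToSet_le x (Finset.mem_erase.mpr ⟨hne, hpS t⟩)
    have h2 : dist t (p t) ≤ dist t c := hp t ▸ distToSet_le t hc
    have h3 := dist_triangle x t (p t)
    have h4 := dist_triangle t x c
    rw [dist_comm t x] at h4
    linarith
  · have h1 := distToSet_le x (Finset.mem_erase.mpr ⟨h, hc⟩)
    linarith

/-- One reverse greedy step, compared with an arbitrary smaller set `T` of centers: the cheapest
removal is at most the average over the removals of centers that are nearest to no point of `T`. -/
theorem kCost_erase_le {V : Type*} [Fintype V] [MetricSpace V] [DecidableEq V]
    (w : V → NNReal) {S T : Finset V} (hT : T.Nonempty) (hTS : T.card < S.card) {y : V}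
    (hy : ∀ z ∈ S, kCost w (S.erase y) Finset.univ ≤ kCost w (S.erase z) Finset.univ) :
    kCost w (S.erase y) Finset.univ ≤ kCost w S Finset.univ +
      2 / ((S.card : ℝ) - T.card) * kCost w T Finset.univ := by
  have hS : S.Nonempty := Finset.card_pos.mp (by omega)
  choose p hpS hp using fun x => exists_distToSet_eq x hS
  set R := S \ T.image p with hR
  have hcard : (S.card : ℝ) - T.card ≤ R.card := by
    have h1 := Finset.le_card_sdiff (T.image p) S
    have h2 : (T.image p).card ≤ T.card := Finset.card_image_le
    have h3 : S.card ≤ R.card + T.card := by rw [← hR] at h1; omega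
    have h4 : (S.card : ℝ) ≤ R.card + T.card := by exact_mod_cast h3
    linarith
  have hpos : (0 : ℝ) < (S.card : ℝ) - T.card := by
    have : (T.card : ℝ) < S.card := by exact_mod_cast hTS
    linarith
  have hcost : 0 ≤ kCost w T Finset.univ :=
    Finset.sum_nonneg fun x _ => mul_nonneg (w x).2 (distToSet_nonneg x T)
  have hz : ∀ z ∈ R, kCost w (S.erase y) Finset.univ - kCost w S Finset.univ ≤
      ∑ x : V, if p x = z then (w x : ℝ) * (2 * distToSet x T) else 0 := by
    intro z hzR
    rw [hR, Finset.mem_sdiff] at hzR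
    have h1 := hy z hzR.1
    have h2 : kCost w (S.erase z) Finset.univ ≤ kCost w S Finset.univ +
        ∑ x : V, if p x = z then (w x : ℝ) * (2 * distToSet x T) else 0 := by
      unfold kCost
      rw [← Finset.sum_add_distrib]
      refine Finset.sum_le_sum fun x _ => ?_
      have h3 := mul_le_mul_of_nonneg_left
        (distToSet_erase_le hT hpS hp (hpS x) (hp x) hzR.2) (w x).2
      rw [mul_add, mul_ite, mul_zero] at h3
      exact h3
    linarith
  have hsum := Finset.card_nsmul_le_sum R _ _ hz
  -- After exchanging the sums, each `x` is charged for at most one `z`, namely `z = p x`.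
  have htot : ∑ z ∈ R, ∑ x : V, (if p x = z then (w x : ℝ) * (2 * distToSet x T) else 0) ≤
      2 * kCost w T Finset.univ := by
    rw [Finset.sum_comm, kCost, Finset.mul_sum]
    refine Finset.sum_le_sum fun x _ => ?_
    have := mul_nonneg (w x).2 (distToSet_nonneg x T)
    rw [Finset.sum_ite_eq]
    split_ifs
    · exact le_of_eq (by ring)
    · exact mul_nonneg zero_le_two this
  rw [nsmul_eq_mul] at hsum
  by_cases hD : kCost w (S.erase y) Finset.univ - kCost w S Finset.univ ≤ 0
  · have : 0 ≤ 2 / ((S.card : ℝ) - T.card) * kCost w T Finset.univ := by positivity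
    linarith
  · have h1 := mul_le_mul_of_nonneg_right hcard (not_le.mp hD).le
    have h2 : kCost w (S.erase y) Finset.univ - kCost w S Finset.univ ≤
        2 * kCost w T Finset.univ / ((S.card : ℝ) - T.card) := by
      rw [le_div_iff₀ hpos]
      linarith
    rw [div_mul_eq_mul_div]
    linarith

theorem exists_kOPT_eq {V : Type*} [Fintype V] [MetricSpace V] (w : V → NNReal) {k : ℕ}
    (hk : k ≤ (Finset.univ : Finset V).card) :
    ∃ T : Finset V, T.card = k ∧
      kOPT w k Finset.univ Finset.univ = kCost w T Finset.univ := by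
  have h : kOPT w k Finset.univ Finset.univ ∈ {c : ℝ | ∃ S : Finset V, S ⊆ Finset.univ ∧
      S.card = k ∧ c = kCost w S Finset.univ} := by
    refine Set.Nonempty.csInf_mem ?_ ?_
    · obtain ⟨T, hT, hTk⟩ := Finset.exists_subset_card_eq hk
      exact ⟨_, T, hT, hTk, rfl⟩
    · refine (Set.finite_range fun S : Finset V => kCost w S Finset.univ).subset ?_
      rintro _ ⟨S, -, -, rfl⟩
      exact ⟨S, rfl⟩
  obtain ⟨T, -, hTk, hT⟩ := h
  exact ⟨T, hTk, hT⟩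

/-- Guarantee along the reverse greedy chain: if `S m = X` and each `S (i−1)` is obtained from
`S i` by removing a point whose removal increases the cost the least, then
`cost(S k') ≤ cost(X) + (∑_{i=k'+1}^{m} 2/(i − k)) · OPT_k(V)`. -/
theorem reverse_greedy_chain_cost {V : Type*} [Fintype V] [MetricSpace V] [DecidableEq V]
    (w : V → NNReal) (X : Finset V) (hX : X.Nonempty)
    (m k k' : ℕ) (hm : X.card = m) (hk : 1 ≤ k) (hkk' : k ≤ k') (hk'm : k' ≤ m)
    (S : ℕ → Finset V) (hSm : S m = X)
    (hstep : ∀ i, k' + 1 ≤ i → i ≤ m →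
      ∃ y ∈ S i, S (i - 1) = (S i).erase y ∧
        ∀ z ∈ S i, kCost w ((S i).erase y) Finset.univ ≤
          kCost w ((S i).erase z) Finset.univ) :
    kCost w (S k') Finset.univ ≤ kCost w X Finset.univ +
      (∑ i ∈ Finset.Icc (k' + 1) m, 2 / ((i : ℝ) - k)) *
        kOPT w k Finset.univ Finset.univ := by
  have hkV : k ≤ (Finset.univ : Finset V).card := by
    have := Finset.card_le_univ X
    rw [Finset.card_univ]
    omega
  obtain ⟨T, hTk, hOPT⟩ := exists_kOPT_eq w hkV
  have hT : T.Nonempty := Finset.card_pos.mp (by omega)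
  rw [hOPT]
  -- The size `(S j).card = j` has to be carried along the downward induction.
  suffices h : (S k').card = k' ∧ kCost w (S k') Finset.univ ≤ kCost w X Finset.univ +
      (∑ i ∈ Finset.Icc (k' + 1) m, 2 / ((i : ℝ) - k)) * kCost w T Finset.univ from h.2
  refine Nat.decreasingInduction' (P := fun j => (S j).card = j ∧
    kCost w (S j) Finset.univ ≤ kCost w X Finset.univ +
      (∑ i ∈ Finset.Icc (j + 1) m, 2 / ((i : ℝ) - k)) * kCost w T Finset.univ) ?_ hk'm ?_
  · rintro j hjm hj ⟨hcard, hle⟩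
    obtain ⟨y, hyS, hSj, hmin⟩ := hstep (j + 1) (by omega) hjm
    rw [Nat.add_sub_cancel] at hSj
    have hone := kCost_erase_le w hT (by omega) hmin
    rw [← hSj, hcard, hTk] at hone
    have hIcc : Finset.Icc (j + 1) m = insert (j + 1) (Finset.Icc (j + 1 + 1) m) := by
      ext i
      simp only [Finset.mem_Icc, Finset.mem_insert]
      omega
    refine ⟨by rw [hSj, Finset.card_erase_of_mem hyS, hcard, Nat.add_sub_cancel], ?_⟩
    rw [hIcc, Finset.sum_insert (by simp), add_mul]
    linarith
  · simp [hSm, hm]
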